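/- Let K be a relatively congruence distributive quasivariety whose class K_rfsi of relatively finitely subdirectly irreducible members is closed under nontrivial subalgebras. If K has the strong epimorphism surjectivity property, then K is an arithmetical variety with the congruence extension property. -/

import Mathlib

namespace Impl

open FirstOrder Language

universe u v

/-- A bundled algebra (first-order structure) for the language `L`. -/
structure Alg (L : FirstOrder.Language.{u, u}) : Type (u + 1) where
  carrier : Type u
  [str : L.Structure carrier]

attribute [instance] Alg.str

variable {L : FirstOrder.Language.{u, u}}

/-- The direct product of a family of algebras. -/
def Alg.pi {ι : Type u} (A : ι → Alg L) : Alg L where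
  carrier := ∀ i, (A i).carrier
  str :=
    { funMap := fun {k} f v i => Structure.funMap f fun j => v j i
      RelMap := fun {k} r v => ∀ i, Structure.RelMap r fun j => v j i }

/-- The binary direct product of two algebras. -/
def Alg.prod (A B : Alg L) : Alg L where
  carrier := A.carrier × B.carrier
  str :=
    { funMap := fun {k} f v =>
        (Structure.funMap f fun j => (v j).1, Structure.funMap f fun j => (v j).2)
      RelMap := fun {k} r v =>
        Structure.RelMap r (fun j => (v j).1) ∧ Structure.RelMap r fun j => (v j).2 }

/-- The ultraproduct of a family of algebras with respect to an ultrafilter. -/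
def Alg.uprod {ι : Type u} (F : Ultrafilter ι) (A : ι → Alg L) : Alg L where
  carrier := Filter.Product (F : Filter ι) fun i => (A i).carrier
  str := inferInstance

/-- Closure under isomorphic copies. -/
def ClosedUnderIso (K : Set (Alg L)) : Prop :=
  ∀ A B : Alg L, A ∈ K → Nonempty (A.carrier ≃[L] B.carrier) → B ∈ K

/-- Closure under subalgebras (up to the identification of a subalgebra with an embedding). -/
def ClosedUnderSub (K : Set (Alg L)) : Prop :=
  ∀ A B : Alg L, B ∈ K → Nonempty (A.carrier ↪[L] B.carrier) → A ∈ K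

/-- Closure under direct products. -/
def ClosedUnderProd (K : Set (Alg L)) : Prop :=
  ∀ (ι : Type u) (A : ι → Alg L), (∀ i, A i ∈ K) → Alg.pi A ∈ K

/-- Closure under finite direct products. -/
def ClosedUnderFinProd (K : Set (Alg L)) : Prop :=
  ∀ (ι : Type u), Finite ι → ∀ A : ι → Alg L, (∀ i, A i ∈ K) → Alg.pi A ∈ K

/-- Closure under homomorphic images. -/
def ClosedUnderHomImg (K : Set (Alg L)) : Prop :=
  ∀ A B : Alg L, A ∈ K → ∀ h : A.carrier →[L] B.carrier, Function.Surjective h → B ∈ K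

/-- Closure under ultraproducts. -/
def ClosedUnderUprod (K : Set (Alg L)) : Prop :=
  ∀ (ι : Type u) (F : Ultrafilter ι) (A : ι → Alg L), (∀ i, A i ∈ K) → Alg.uprod F A ∈ K

/-- A universal class: a class closed under isomorphic copies, subalgebras and ultraproducts. -/
def IsUniversalClass (K : Set (Alg L)) : Prop :=
  ClosedUnderIso K ∧ ClosedUnderSub K ∧ ClosedUnderUprod K

/-- A quasivariety: a class closed under isomorphic copies, subalgebras, direct products and
ultraproducts. -/
def IsQuasivariety (K : Set (Alg L)) : Prop :=
  ClosedUnderIso K ∧ ClosedUnderSub K ∧ ClosedUnderProd K ∧ ClosedUnderUprod K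

/-- A variety: a class closed under homomorphic images, subalgebras and direct products. -/
def IsVariety (K : Set (Alg L)) : Prop :=
  ClosedUnderHomImg K ∧ ClosedUnderSub K ∧ ClosedUnderProd K

/-- The least quasivariety containing `K`. -/
def QGen (K : Set (Alg L)) : Set (Alg L) :=
  ⋂₀ { M : Set (Alg L) | IsQuasivariety M ∧ K ⊆ M }

/-- The least variety containing `K`. -/
def VGen (K : Set (Alg L)) : Set (Alg L) :=
  ⋂₀ { M : Set (Alg L) | IsVariety M ∧ K ⊆ M }

/-- An elementary class: the class of all models of some first-order theory. -/
def IsElementary (K : Set (Alg L)) : Prop :=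
  ∃ T : L.Theory, ∀ A : Alg L, A ∈ K ↔ ∀ φ ∈ T, A.carrier ⊨ φ

/-- Finite conjunctions of equations (with `⊤` as the empty conjunction). -/
inductive IsConjEq {α : Type v} : ∀ {k : ℕ}, L.BoundedFormula α k → Prop
  | top {k} : IsConjEq (⊤ : L.BoundedFormula α k)
  | equal {k} (t₁ t₂ : L.Term (α ⊕ Fin k)) : IsConjEq (BoundedFormula.equal t₁ t₂)
  | inf {k} {φ ψ : L.BoundedFormula α k} : IsConjEq φ → IsConjEq ψ → IsConjEq (φ ⊓ ψ)

/-- Positive quantifier-free formulas: built from equations, `⊤` and `⊥` using `⊓` and `⊔`. -/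
inductive IsPosQF {α : Type v} : ∀ {k : ℕ}, L.BoundedFormula α k → Prop
  | falsum {k} : IsPosQF (⊥ : L.BoundedFormula α k)
  | top {k} : IsPosQF (⊤ : L.BoundedFormula α k)
  | equal {k} (t₁ t₂ : L.Term (α ⊕ Fin k)) : IsPosQF (BoundedFormula.equal t₁ t₂)
  | inf {k} {φ ψ : L.BoundedFormula α k} : IsPosQF φ → IsPosQF ψ → IsPosQF (φ ⊓ ψ)
  | sup {k} {φ ψ : L.BoundedFormula α k} : IsPosQF φ → IsPosQF ψ → IsPosQF (φ ⊔ ψ)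

/-- Primitive positive (pp) formulas: existentially quantified finite conjunctions of
equations. -/
inductive IsPP {α : Type v} : ∀ {k : ℕ}, L.BoundedFormula α k → Prop
  | of_conjEq {k} {φ : L.BoundedFormula α k} : IsConjEq φ → IsPP φ
  | ex {k} {φ : L.BoundedFormula α (k + 1)} : IsPP φ → IsPP φ.ex

/-- Existential positive formulas: existentially quantified positive quantifier-free
formulas. -/
inductive IsExistPos {α : Type v} : ∀ {k : ℕ}, L.BoundedFormula α k → Prop
  | of_posQF {k} {φ : L.BoundedFormula α k} : IsPosQF φ → IsExistPos φ
  | ex {k} {φ : L.BoundedFormula α (k + 1)} : IsExistPos φ → IsExistPos φ.ex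

/-- Two formulas are equivalent in a class of algebras. -/
def EquivOn (K : Set (Alg L)) {α : Type v} (φ ψ : L.Formula α) : Prop :=
  ∀ A : Alg L, A ∈ K → ∀ x : α → A.carrier, φ.Realize x ↔ ψ.Realize x

/-- A formula is preserved by homomorphisms in `K`. -/
def PreservedByHomsOn (K : Set (Alg L)) {α : Type v} (φ : L.Formula α) : Prop :=
  ∀ A B : Alg L, A ∈ K → B ∈ K → ∀ (h : A.carrier →[L] B.carrier) (x : α → A.carrier),
    φ.Realize x → φ.Realize fun a => h (x a)

/-- A formula is preserved by direct products in `K`. -/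
def PreservedByProdsOn (K : Set (Alg L)) {α : Type v} (φ : L.Formula α) : Prop :=
  ∀ (ι : Type u) (A : ι → Alg L), (∀ i, A i ∈ K) → ∀ x : α → (Alg.pi A).carrier,
    (∀ i, φ.Realize fun a => x a i) → φ.Realize x

/-- An `n`-ary partial function on a class of algebras `K`: a family assigning to each member of
`K` an `n`-ary partial function on its carrier. -/
def PartialFunOn (K : Set (Alg L)) (n : ℕ) :=
  ∀ (A : Alg L), A ∈ K → ((Fin n → A.carrier) →. A.carrier)

/-- A partial function on `K` is defined by the formula `φ(x₁, …, xₙ, y)` (the last variable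
being the output) when its graph on each member of `K` is the solution set of `φ`. -/
def DefinedBy {K : Set (Alg L)} {n : ℕ} (f : PartialFunOn K n)
    (φ : L.Formula (Fin (n + 1))) : Prop :=
  ∀ (A : Alg L) (hA : A ∈ K) (x : Fin n → A.carrier) (b : A.carrier),
    b ∈ f A hA x ↔ φ.Realize (Fin.snoc x b)

/-- The formula `φ(x₁, …, xₙ, y)` is functional in `K`: for all inputs there is at most one
output satisfying it. -/
def FunctionalIn (K : Set (Alg L)) {n : ℕ} (φ : L.Formula (Fin (n + 1))) : Prop :=
  ∀ A : Alg L, A ∈ K → ∀ (x : Fin n → A.carrier) (b₁ b₂ : A.carrier),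
    φ.Realize (Fin.snoc x b₁) → φ.Realize (Fin.snoc x b₂) → b₁ = b₂

/-- A partial function on `K` is an operation of `K` when it is preserved by all homomorphisms
between members of `K`. -/
def IsOperationOn {K : Set (Alg L)} {n : ℕ} (f : PartialFunOn K n) : Prop :=
  ∀ (A B : Alg L) (hA : A ∈ K) (hB : B ∈ K) (h : A.carrier →[L] B.carrier)
    (x : Fin n → A.carrier) (b : A.carrier),
    b ∈ f A hA x → h b ∈ f B hB fun i => h (x i)

/-- A partial function on `K` is implicit when it is defined by some formula. -/
def IsImplicit {K : Set (Alg L)} {n : ℕ} (f : PartialFunOn K n) : Prop :=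
  ∃ φ : L.Formula (Fin (n + 1)), DefinedBy f φ

/-- An implicit operation of `K`: a partial function that is both implicit and an operation. -/
def IsImplicitOp {K : Set (Alg L)} {n : ℕ} (f : PartialFunOn K n) : Prop :=
  IsImplicit f ∧ IsOperationOn f

/-- An implicit operation is extendable when every tuple in every member of `K` lies in the
domain of the operation in some extension inside `K`. -/
def Extendable {K : Set (Alg L)} {n : ℕ} (f : PartialFunOn K n) : Prop :=
  ∀ (A : Alg L) (hA : A ∈ K) (x : Fin n → A.carrier),
    ∃ (B : Alg L) (hB : B ∈ K) (e : A.carrier ↪[L] B.carrier),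
      (f B hB fun i => e (x i)).Dom

/-- The dominion of a subset `s` of `M` relative to the class `K`. -/
def dominion (K : Set (Alg L)) (M : Type u) [L.Structure M] (s : Set M) : Set M :=
  { b | ∀ C : Alg L, C ∈ K → ∀ g h : M →[L] C.carrier, (∀ a ∈ s, g a = h a) → g b = h b }

/-- The strong epimorphism surjectivity property. -/
def StrongES (K : Set (Alg L)) : Prop :=
  ∀ (A B : Alg L), A ∈ K → B ∈ K → ∀ (f : A.carrier →[L] B.carrier) (b : B.carrier),
    b ∉ Set.range f →
      ∃ C : Alg L, C ∈ K ∧ ∃ g h : B.carrier →[L] C.carrier,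
        (∀ a : A.carrier, g (f a) = h (f a)) ∧ g b ≠ h b

/-- The weak epimorphism surjectivity property: every `K`-epimorphism between finitely
generated members of `K` is surjective. -/
def WeakES (K : Set (Alg L)) : Prop :=
  ∀ (A B : Alg L), A ∈ K → B ∈ K →
    Structure.FG L A.carrier → Structure.FG L B.carrier →
      ∀ f : A.carrier →[L] B.carrier,
        (∀ C : Alg L, C ∈ K → ∀ g h : B.carrier →[L] C.carrier,
          (∀ a : A.carrier, g (f a) = h (f a)) → g = h) →
        Function.Surjective f

/-- The amalgamation property. -/
def HasAmalgamation (K : Set (Alg L)) : Prop :=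
  ∀ (A B C : Alg L), A ∈ K → B ∈ K → C ∈ K →
    ∀ (f : A.carrier ↪[L] B.carrier) (g : A.carrier ↪[L] C.carrier),
      ∃ D : Alg L, D ∈ K ∧ ∃ (f' : B.carrier ↪[L] D.carrier) (g' : C.carrier ↪[L] D.carrier),
        ∀ a : A.carrier, f' (f a) = g' (g a)

/-- A finitely presented member of `K`: an algebra in `K` with a finite presentation, phrased
through the usual universal property of `T(X)/Cg_K(Y)`. -/
def FinitelyPresentedIn (K : Set (Alg L)) (B : Alg L) : Prop :=
  B ∈ K ∧ ∃ (m : ℕ) (Y : Finset (L.Term (Fin m) × L.Term (Fin m))) (b : Fin m → B.carrier),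
    Substructure.closure L (Set.range b) = ⊤ ∧
    (∀ p ∈ Y, p.1.realize b = p.2.realize b) ∧
    ∀ C : Alg L, C ∈ K → ∀ x : Fin m → C.carrier,
      (∀ p ∈ Y, p.1.realize x = p.2.realize x) →
        ∃ g : B.carrier →[L] C.carrier, ∀ i, g (b i) = x i

/-- Subdirectly irreducible relative to `K`. -/
def IsRSI (K : Set (Alg L)) (A : Alg L) : Prop :=
  A ∈ K ∧ ∀ (ι : Type u) (B : ι → Alg L), (∀ i, B i ∈ K) →
    ∀ h : A.carrier ↪[L] (Alg.pi B).carrier,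
      (∀ i, Function.Surjective fun a => h a i) →
        ∃ i, Function.Bijective fun a => h a i

/-- Finitely subdirectly irreducible relative to `K`. -/
def IsRFSI (K : Set (Alg L)) (A : Alg L) : Prop :=
  A ∈ K ∧ ∀ (ι : Type u), Finite ι → ∀ B : ι → Alg L, (∀ i, B i ∈ K) →
    ∀ h : A.carrier ↪[L] (Alg.pi B).carrier,
      (∀ i, Function.Surjective fun a => h a i) →
        ∃ i, Function.Bijective fun a => h a i

/-- A congruence on an algebra: an equivalence relation compatible with all the operations. -/
def IsCongruenceOn (A : Alg L) (θ : A.carrier → A.carrier → Prop) : Prop :=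
  Equivalence θ ∧
    ∀ (k : ℕ) (f : L.Functions k) (x y : Fin k → A.carrier),
      (∀ i, θ (x i) (y i)) → θ (Structure.funMap f x) (Structure.funMap f y)

/-- The quotient of an algebra by (the setoid of) an equivalence relation; when the relation is
a congruence this is the quotient algebra. -/
noncomputable def Alg.quot (A : Alg L) (θ : A.carrier → A.carrier → Prop) (h : Equivalence θ) :
    Alg L where
  carrier := Quotient (⟨θ, h⟩ : Setoid A.carrier)
  str :=
    { funMap := fun {k} f v => Quotient.mk _ (Structure.funMap f fun i => (v i).out)
      RelMap := fun {k} r v => Structure.RelMap r fun i => (v i).out }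

/-- A `K`-congruence of `A`: a congruence whose quotient lies in `K`. -/
def IsRelCong (K : Set (Alg L)) (A : Alg L) (θ : A.carrier → A.carrier → Prop) : Prop :=
  ∃ h : IsCongruenceOn A θ, Alg.quot A θ h.1 ∈ K

/-- The join of two relations in the lattice of `K`-congruences of `A`. -/
def relCongJoin (K : Set (Alg L)) (A : Alg L)
    (θ φ : A.carrier → A.carrier → Prop) (x y : A.carrier) : Prop :=
  ∀ ρ : A.carrier → A.carrier → Prop, IsRelCong K A ρ →
    (∀ a b, θ a b → ρ a b) → (∀ a b, φ a b → ρ a b) → ρ x y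

/-- Relative congruence distributivity: the lattice of `K`-congruences of each member of `K`
is distributive. -/
def RelCongDistributive (K : Set (Alg L)) : Prop :=
  ∀ A : Alg L, A ∈ K → ∀ θ φ ψ : A.carrier → A.carrier → Prop,
    IsRelCong K A θ → IsRelCong K A φ → IsRelCong K A ψ →
      ∀ x y : A.carrier,
        (θ x y ∧ relCongJoin K A φ ψ x y) ↔
          relCongJoin K A (fun a b => θ a b ∧ φ a b) (fun a b => θ a b ∧ ψ a b) x y

/-- The join of two relations in the lattice of congruences of `A`. -/
def congJoin (A : Alg L) (θ φ : A.carrier → A.carrier → Prop) (x y : A.carrier) : Prop :=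
  ∀ ρ : A.carrier → A.carrier → Prop, IsCongruenceOn A ρ →
    (∀ a b, θ a b → ρ a b) → (∀ a b, φ a b → ρ a b) → ρ x y

/-- Congruence permutability for all members of a class. -/
def CongPermutableClass (K : Set (Alg L)) : Prop :=
  ∀ A : Alg L, A ∈ K → ∀ θ φ : A.carrier → A.carrier → Prop,
    IsCongruenceOn A θ → IsCongruenceOn A φ →
      ∀ x y : A.carrier, (∃ z, θ x z ∧ φ z y) ↔ ∃ z, φ x z ∧ θ z y

/-- Congruence distributivity for all members of a class. -/
def CongDistributiveClass (K : Set (Alg L)) : Prop :=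
  ∀ A : Alg L, A ∈ K → ∀ θ φ ψ : A.carrier → A.carrier → Prop,
    IsCongruenceOn A θ → IsCongruenceOn A φ → IsCongruenceOn A ψ →
      ∀ x y : A.carrier,
        (θ x y ∧ congJoin A φ ψ x y) ↔
          congJoin A (fun a b => θ a b ∧ φ a b) (fun a b => θ a b ∧ ψ a b) x y

/-- The congruence extension property. -/
def HasCEP (K : Set (Alg L)) : Prop :=
  ∀ A B : Alg L, A ∈ K → B ∈ K → ∀ e : A.carrier ↪[L] B.carrier,
    ∀ θ : A.carrier → A.carrier → Prop, IsCongruenceOn A θ →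
      ∃ ρ : B.carrier → B.carrier → Prop, IsCongruenceOn B ρ ∧
        ∀ x y : A.carrier, θ x y ↔ ρ (e x) (e y)

/-- The language consisting of one new function symbol `gᵢ` of arity `ar i` for each `i`. -/
def newLang {ι : Type u} (ar : ι → ℕ) : FirstOrder.Language.{u, u} where
  Functions := fun n => { i : ι // ar i = n }
  Relations := fun _ => PEmpty

/-- The `L`-reduct of an algebra in an expanded language `L.sum N`. -/
def algReduct {N : FirstOrder.Language.{u, u}} (B : Alg (L.sum N)) : Alg L where
  carrier := B.carrier
  str := (LHom.sumInl : L →ᴸ L.sum N).reduct B.carrier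

/-- The class `K[L_F]` of expansions of members of `K` on which each operation in the family
`f` is total, interpreting the new symbol `gᵢ` as `f i`. -/
def expClass (K : Set (Alg L)) {ι : Type u} (ar : ι → ℕ)
    (f : ∀ i, PartialFunOn K (ar i)) : Set (Alg (L.sum (newLang ar))) :=
  { B | ∃ hB : algReduct B ∈ K,
      ∀ (i : ι) (x : Fin (ar i) → B.carrier),
        Structure.funMap (L := L.sum (newLang ar)) (M := B.carrier)
            (Sum.inr ⟨i, rfl⟩ : (L.sum (newLang ar)).Functions (ar i)) x
          ∈ f i (algReduct B) hB x }

/-- Closure under subalgebras (and isomorphic copies) inside a fixed language. -/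
def SClosure {L' : FirstOrder.Language.{u, u}} (S : Set (Alg L')) : Set (Alg L') :=
  { A | ∃ B ∈ S, Nonempty (A.carrier ↪[L'] B.carrier) }

/-- Membership in `ext_pp(K)`: an extendable implicit operation defined by a pp formula. -/
def InExtPP {K : Set (Alg L)} {n : ℕ} (f : PartialFunOn K n) : Prop :=
  IsOperationOn f ∧ (∃ φ : L.Formula (Fin (n + 1)), IsPP φ ∧ DefinedBy f φ) ∧ Extendable f

/-- `M` is the pp expansion of `K` induced by the family `f` of extendable pp-definable
implicit operations, with one new symbol of arity `ar i` for each `i`. -/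
def IsPPExpansionVia (K : Set (Alg L)) {ι : Type u} (ar : ι → ℕ)
    (f : ∀ i, PartialFunOn K (ar i)) (M : Set (Alg (L.sum (newLang ar)))) : Prop :=
  (∀ i, 0 < ar i) ∧ (∀ i, InExtPP (f i)) ∧ M = SClosure (expClass K ar f)

/-- Every implicit operation of `K` is interpolated in `M` by a set of terms of the expanded
language. -/
def InterpolatesByTermsInExp (K : Set (Alg L)) {ι : Type u} {ar : ι → ℕ}
    (M : Set (Alg (L.sum (newLang ar)))) : Prop :=
  ∀ n : ℕ, 0 < n → ∀ g : PartialFunOn K n, IsImplicitOp g →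
    ∃ T : Set ((L.sum (newLang ar)).Term (Fin n)),
      ∀ A : Alg (L.sum (newLang ar)), A ∈ M →
        ∀ (hA : algReduct A ∈ K) (x : Fin n → A.carrier) (b : A.carrier),
          b ∈ g (algReduct A) hA x → ∃ t ∈ T, t.realize x = b

/-- `M` is a Beth companion of `K` (via the given expansion datum). -/
def IsBethCompanionVia (K : Set (Alg L)) {ι : Type u} (ar : ι → ℕ)
    (f : ∀ i, PartialFunOn K (ar i)) (M : Set (Alg (L.sum (newLang ar)))) : Prop :=
  IsPPExpansionVia K ar f M ∧ InterpolatesByTermsInExp K M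

/-- A pp expansion is congruence preserving when the `M`-congruences of each member of `M`
coincide with the `K`-congruences of its `L`-reduct. -/
def CongPreserving {N : FirstOrder.Language.{u, u}} (K : Set (Alg L))
    (M : Set (Alg (L.sum N))) : Prop :=
  ∀ A : Alg (L.sum N), A ∈ M → ∀ θ : A.carrier → A.carrier → Prop,
    IsRelCong M A θ ↔ IsRelCong K (algReduct A) θ

/-- Reinterpretation of an `L₁`-algebra as an `L₂`-algebra along a map sending `L₂`-symbols to
`L₁`-terms (both languages are assumed to be purely functional). -/
def reinterpret {L₁ L₂ : FirstOrder.Language.{u, u}} (ρ : ∀ n, L₂.Functions n → L₁.Term (Fin n))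
    (A : Alg L₁) : Alg L₂ where
  carrier := A.carrier
  str :=
    { funMap := fun {k} s x => (ρ k s).realize x
      RelMap := fun {k} _ _ => False }

/-- Two expansions of the same base language `L` are faithfully term equivalent relative to
`L`. -/
def FaithfullyTermEquivRel (L : FirstOrder.Language.{u, u}) {N₁ N₂ : FirstOrder.Language.{u, u}}
    (M₁ : Set (Alg (L.sum N₁))) (M₂ : Set (Alg (L.sum N₂))) : Prop :=
  ∃ (τ : ∀ n, (L.sum N₁).Functions n → (L.sum N₂).Term (Fin n))
    (ρ : ∀ n, (L.sum N₂).Functions n → (L.sum N₁).Term (Fin n)),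
    (∀ (n : ℕ) (s : L.Functions n),
      τ n (Sum.inl s) = Term.func (Sum.inl s : (L.sum N₂).Functions n) Term.var) ∧
    (∀ (n : ℕ) (s : L.Functions n),
      ρ n (Sum.inl s) = Term.func (Sum.inl s : (L.sum N₁).Functions n) Term.var) ∧
    (∀ A : Alg (L.sum N₁), A ∈ M₁ → reinterpret ρ A ∈ M₂) ∧
    (∀ B : Alg (L.sum N₂), B ∈ M₂ → reinterpret τ B ∈ M₁) ∧
    (∀ A : Alg (L.sum N₁), A ∈ M₁ → reinterpret τ (reinterpret ρ A) = A) ∧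
    (∀ B : Alg (L.sum N₂), B ∈ M₂ → reinterpret ρ (reinterpret τ B) = B)

/-!
Relative congruence distributivity, together with the closure of `K_rfsi` under nontrivial
subalgebras, makes the kernel of every homomorphism from a member of `K` to a member of `K_rfsi`
meet prime among the `K`-congruences. Hence a homomorphism `X × Y → C` with `C ∈ K_rfsi` factors
through one of the two projections. For a span `p : A → X`, `q : A → Y` in `K`, two homomorphisms
`X × Y → C` that agree on the image of `⟨p, q⟩` therefore also agree at `(p a, q b)` as soon as
`p a` and `p b` are identified in the pushout of the span, and strong epimorphism surjectivity
turns this into an element `c` with `p c = p a` and `q c = q b`.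

Three spans then give the theorem: the two projections of the kernel of a surjection `h : A → B`
(the kernel of `h` is a `K`-congruence, so `B ∈ K`), two quotient maps of `A` (congruences permute),
and an embedding `A → B` with a quotient map of `A` (congruence extension).
-/

section Homomorphisms

/-- The kernel of a homomorphism, as a binary relation. -/
abbrev homKer {M N : Type u} [L.Structure M] [L.Structure N] (f : M →[L] N) : M → M → Prop :=
  fun x y => f x = f y

theorem isCongruenceOn_homKer {A B : Alg L} (f : A.carrier →[L] B.carrier) :
    IsCongruenceOn A (homKer f) := by
  refine ⟨⟨fun _ => rfl, Eq.symm, Eq.trans⟩, fun k s x y hxy => ?_⟩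
  have hcomp : f ∘ x = f ∘ y := funext hxy
  simp only [homKer, Hom.map_fun, hcomp]

namespace Alg

/-- The first projection of a binary product. -/
def fst (A B : Alg L) : (A.prod B).carrier →[L] A.carrier where
  toFun := Prod.fst
  map_rel' _ _ h := h.1

/-- The second projection of a binary product. -/
def snd (A B : Alg L) : (A.prod B).carrier →[L] B.carrier where
  toFun := Prod.snd
  map_rel' _ _ h := h.2

/-- The homomorphism into a binary product with prescribed components. -/
def prodLift {A X Y : Alg L} (p : A.carrier →[L] X.carrier) (q : A.carrier →[L] Y.carrier) :
    A.carrier →[L] (X.prod Y).carrier where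
  toFun a := (p a, q a)
  map_fun' s x := Prod.ext (p.map_fun s x) (q.map_fun s x)
  map_rel' r x h := ⟨p.map_rel r x h, q.map_rel r x h⟩

/-- The `i`-th projection of a direct product. -/
def eval {ι : Type u} (B : ι → Alg L) (i : ι) : (pi B).carrier →[L] (B i).carrier where
  toFun x := x i
  map_rel' _ _ h := h i

/-- The homomorphism into a direct product with prescribed components. -/
def piLift {ι : Type u} {A : Alg L} {B : ι → Alg L} (f : ∀ i, A.carrier →[L] (B i).carrier) :
    A.carrier →[L] (pi B).carrier where
  toFun a i := f i a
  map_fun' s x := funext fun i => (f i).map_fun s x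
  map_rel' r x h i := (f i).map_rel r x h

/-- The quotient map from a direct product onto an ultraproduct. -/
def toUprod {ι : Type u} (F : Ultrafilter ι) (B : ι → Alg L) :
    (pi B).carrier →[L] (uprod F B).carrier where
  toFun := Quotient.mk ((F : Filter ι).productSetoid fun i => (B i).carrier)
  map_fun' s x := (Ultraproduct.funMap_cast (M := fun i => (B i).carrier) (u := F) s x).symm
  map_rel' r x h :=
    (relMap_quotient_mk' (ps := Ultraproduct.setoidPrestructure (fun i => (B i).carrier) F) _ r x).2
      (Filter.Eventually.of_forall h)

theorem toUprod_eq_iff {ι : Type u} {F : Ultrafilter ι} {B : ι → Alg L} {x y : (pi B).carrier} :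
    toUprod F B x = toUprod F B y ↔ ∀ᶠ i in (F : Filter ι), x i = y i :=
  Quotient.eq (r := (F : Filter ι).productSetoid fun i => (B i).carrier)

variable [L.IsAlgebraic]

/-- The quotient map of an algebra by a congruence. -/
noncomputable def quotHom (A : Alg L) {θ : A.carrier → A.carrier → Prop}
    (hθ : IsCongruenceOn A θ) : A.carrier →[L] (A.quot θ hθ.1).carrier where
  toFun := Quotient.mk ⟨θ, hθ.1⟩
  map_fun' s x := Quotient.sound (hθ.2 _ s _ _ fun i =>
    hθ.1.symm (Quotient.mk_out (s := ⟨θ, hθ.1⟩) (x i)))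
  map_rel' r := isEmptyElim r

theorem quotHom_surjective (A : Alg L) {θ : A.carrier → A.carrier → Prop}
    (hθ : IsCongruenceOn A θ) : Function.Surjective (A.quotHom hθ) :=
  Quotient.exists_rep

@[simp]
theorem homKer_quotHom (A : Alg L) {θ : A.carrier → A.carrier → Prop}
    (hθ : IsCongruenceOn A θ) : homKer (A.quotHom hθ) = θ :=
  funext₂ fun _ _ => propext (Quotient.eq (r := ⟨θ, hθ.1⟩))

end Alg

variable [L.IsAlgebraic] {M N P : Type u} [L.Structure M] [L.Structure N] [L.Structure P]

theorem exists_hom_factor {h : M →[L] N} (hh : Function.Surjective h) {k : M →[L] P}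
    (hk : homKer h ≤ homKer k) : ∃ m : N →[L] P, ∀ x, m (h x) = k x := by
  have hinv (x : M) : k (Function.surjInv hh (h x)) = k x := hk _ _ (Function.surjInv_eq hh _)
  refine ⟨⟨fun y => k (Function.surjInv hh y), fun s y => ?_, fun r => isEmptyElim r⟩, hinv⟩
  obtain ⟨x, rfl⟩ : ∃ x, y = h ∘ x :=
    ⟨Function.surjInv hh ∘ y, funext fun i => (Function.surjInv_eq hh (y i)).symm⟩
  rw [← h.map_fun, hinv, k.map_fun]
  exact congrArg _ (funext fun i => (hinv (x i)).symm)

theorem exists_embedding_factor {h : M →[L] N} (hh : Function.Surjective h) {k : M →[L] P}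
    (hk : homKer h = homKer k) : ∃ m : N ↪[L] P, ∀ x, m (h x) = k x := by
  obtain ⟨m, hm⟩ := exists_hom_factor hh hk.le
  have hinj : Function.Injective m := hh.forall₂.2 fun x y hxy => by
    rw [hm, hm] at hxy
    exact hk.ge x y hxy
  exact ⟨Embedding.ofInjective hinj, hm⟩

end Homomorphisms

section RelativeCongruences

variable {K : Set (Alg L)} {A : Alg L}

theorem le_relCongJoin_left (θ φ : A.carrier → A.carrier → Prop) : θ ≤ relCongJoin K A θ φ :=
  fun x y hxy _ _ hθ _ => hθ x y hxy

theorem le_relCongJoin_right (θ φ : A.carrier → A.carrier → Prop) : φ ≤ relCongJoin K A θ φ :=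
  fun x y hxy _ _ _ hφ => hφ x y hxy

theorem relCongJoin_eq_sInf (θ φ : A.carrier → A.carrier → Prop) :
    relCongJoin K A θ φ = sInf {ρ | IsRelCong K A ρ ∧ θ ≤ ρ ∧ φ ≤ ρ} := by
  ext x y
  simp only [relCongJoin, sInf_apply, iInf_apply, iInf_Prop_eq, Subtype.forall, Set.mem_ofPred_eq,
    and_imp]
  rfl

variable [L.IsAlgebraic]

theorem isRelCong_homKer (hS : ClosedUnderSub K) {B : Alg L} (hB : B ∈ K)
    (f : A.carrier →[L] B.carrier) : IsRelCong K A (homKer f) := by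
  have hf := isCongruenceOn_homKer f
  obtain ⟨m, -⟩ := exists_embedding_factor (A.quotHom_surjective hf) (A.homKer_quotHom hf)
  exact ⟨hf, hS _ B hB ⟨m⟩⟩

theorem IsRelCong.exists_eq_homKer {θ : A.carrier → A.carrier → Prop} (hθ : IsRelCong K A θ) :
    ∃ B ∈ K, ∃ f : A.carrier →[L] B.carrier, Function.Surjective f ∧ θ = homKer f :=
  ⟨_, hθ.2, A.quotHom hθ.1, A.quotHom_surjective hθ.1, (A.homKer_quotHom hθ.1).symm⟩

theorem isRelCong_sInf (hS : ClosedUnderSub K) (hP : ClosedUnderProd K)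
    {S : Set (A.carrier → A.carrier → Prop)} (hK : ∀ ρ ∈ S, IsRelCong K A ρ) :
    IsRelCong K A (sInf S) := by
  choose B hB f _ hf using fun ρ : S => (hK ρ ρ.2).exists_eq_homKer
  have hker : sInf S = homKer (Alg.piLift f) := by
    ext x y
    have hfxy (ρ : S) : ρ.1 x y ↔ f ρ x = f ρ y := iff_of_eq (congrFun₂ (hf ρ) x y)
    simp only [sInf_apply, iInf_apply, iInf_Prop_eq, hfxy]
    exact funext_iff.symm
  exact hker ▸ isRelCong_homKer hS (hP S B hB) (Alg.piLift f)

theorem isRelCong_sSup_of_directedOn (hS : ClosedUnderSub K) (hU : ClosedUnderUprod K)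
    {c : Set (A.carrier → A.carrier → Prop)} (hne : c.Nonempty) (hc : DirectedOn (· ≤ ·) c)
    (hK : ∀ ρ ∈ c, IsRelCong K A ρ) : IsRelCong K A (sSup c) := by
  choose B hB f _ hf using fun ρ : c => (hK ρ ρ.2).exists_eq_homKer
  have : Nonempty c := hne.to_subtype
  have : IsDirectedOrder c := ⟨hc.directed_val⟩
  let F : Ultrafilter c := Ultrafilter.of Filter.atTop
  have hker : sSup c = homKer ((Alg.toUprod F B).comp (Alg.piLift f)) := by
    ext x y
    have hfxy (ρ : c) : ρ.1 x y ↔ f ρ x = f ρ y := iff_of_eq (congrFun₂ (hf ρ) x y)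
    simp only [sSup_apply, iSup_apply, iSup_Prop_eq, homKer, Hom.comp_apply, Alg.toUprod_eq_iff]
    constructor
    · rintro ⟨ρ, hρ⟩
      have hge : ∀ᶠ σ in (F : Filter c), ρ ≤ σ :=
        Ultrafilter.of_le _ (Filter.eventually_ge_atTop ρ)
      exact hge.mono fun σ hσ => (hfxy σ).1 (hσ x y hρ)
    · intro hxy
      obtain ⟨ρ, hρ⟩ := hxy.exists
      exact ⟨ρ, (hfxy ρ).2 hρ⟩
  exact hker ▸ isRelCong_homKer hS (hU c F B hB) _

theorem isRelCong_relCongJoin (hS : ClosedUnderSub K) (hP : ClosedUnderProd K)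
    (θ φ : A.carrier → A.carrier → Prop) : IsRelCong K A (relCongJoin K A θ φ) :=
  relCongJoin_eq_sInf (K := K) θ φ ▸ isRelCong_sInf hS hP fun _ hρ => hρ.1

theorem prod_mem (hS : ClosedUnderSub K) (hP : ClosedUnderProd K) {B : Alg L} (hA : A ∈ K)
    (hB : B ∈ K) : A.prod B ∈ K := by
  let C : ULift.{u} Bool → Alg L := fun i => bif i.down then A else B
  let f : ∀ i, (A.prod B).carrier →[L] (C i).carrier
    | ⟨true⟩ => A.fst B
    | ⟨false⟩ => A.snd B
  have hf : Function.Injective (Alg.piLift f) := fun x y hxy =>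
    Prod.ext (congrFun hxy ⟨true⟩) (congrFun hxy ⟨false⟩)
  refine hS _ _ (hP _ C ?_) ⟨Embedding.ofInjective hf⟩
  rintro ⟨_ | _⟩
  exacts [hB, hA]

end RelativeCongruences

section SubdirectIrreducibility

variable {K : Set (Alg L)}

theorem IsRSI.isRFSI {A : Alg L} (hA : IsRSI K A) : IsRFSI K A :=
  ⟨hA.1, fun ι _ => hA.2 ι⟩

variable [L.IsAlgebraic]

theorem isRSI_of_maximal_homKer (hS : ClosedUnderSub K) {A C : Alg L} (hC : C ∈ K)
    {f : A.carrier →[L] C.carrier} (hf : Function.Surjective f) {x y : A.carrier}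
    (hmax : Maximal (fun ρ => IsRelCong K A ρ ∧ ¬ρ x y) (homKer f)) : IsRSI K C := by
  refine ⟨hC, fun ι B hB e he => ?_⟩
  obtain ⟨i, hi⟩ : ∃ i, e (f x) i ≠ e (f y) i :=
    Function.ne_iff.1 (e.injective.ne hmax.prop.2)
  let g : A.carrier →[L] (B i).carrier := (Alg.eval B i).comp (e.toHom.comp f)
  have hfg : homKer f ≤ homKer g := fun a b hab => congrArg (fun c => e c i) hab
  have hgf : homKer g ≤ homKer f := hmax.le_of_ge ⟨isRelCong_homKer hS (hB i) g, hi⟩ hfg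
  exact ⟨i, hf.forall₂.2 hgf, he i⟩

theorem exists_maximal_isRelCong_not (hS : ClosedUnderSub K) (hU : ClosedUnderUprod K)
    {A : Alg L} (hA : A ∈ K) {x y : A.carrier} (hxy : x ≠ y) :
    ∃ κ, Maximal (fun ρ => IsRelCong K A ρ ∧ ¬ρ x y) κ := by
  obtain ⟨κ, -, hκ⟩ := zorn_le_nonempty₀ {ρ | IsRelCong K A ρ ∧ ¬ρ x y}
    (fun c hcS hc ρ hρ => ⟨sSup c,
      ⟨isRelCong_sSup_of_directedOn hS hU ⟨ρ, hρ⟩ hc.directedOn fun σ hσ => (hcS hσ).1, by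
        simp only [sSup_apply, iSup_apply, iSup_Prop_eq, not_exists]
        exact fun σ => (hcS σ.2).2⟩,
      fun _ => le_sSup⟩)
    (homKer (Hom.id L A.carrier)) ⟨isRelCong_homKer hS hA _, hxy⟩
  exact ⟨κ, hκ⟩

theorem exists_hom_isRSI_ne (hS : ClosedUnderSub K) (hU : ClosedUnderUprod K) {A : Alg L}
    (hA : A ∈ K) {x y : A.carrier} (hxy : x ≠ y) :
    ∃ C, IsRSI K C ∧ ∃ f : A.carrier →[L] C.carrier, f x ≠ f y := by
  obtain ⟨κ, hκ⟩ := exists_maximal_isRelCong_not hS hU hA hxy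
  obtain ⟨C, hC, f, hf, rfl⟩ := hκ.prop.1.exists_eq_homKer
  exact ⟨C, isRSI_of_maximal_homKer hS hC hf hκ, f, hκ.prop.2⟩

theorem mem_dominion_of_forall_isRSI (hS : ClosedUnderSub K) (hU : ClosedUnderUprod K)
    {A : Alg L} {s : Set A.carrier} {b : A.carrier}
    (hb : ∀ C, IsRSI K C → ∀ g h : A.carrier →[L] C.carrier, Set.EqOn g h s → g b = h b) :
    b ∈ dominion K A.carrier s := by
  intro D hD g h hgh
  by_contra hne
  obtain ⟨C, hC, r, hr⟩ := exists_hom_isRSI_ne hS hU hD hne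
  exact hr (hb C hC (r.comp g) (r.comp h) fun a ha => congrArg r (hgh a ha))

theorem IsRFSI.exists_le_homKer {A C : Alg L} (hC : IsRFSI K C) {f : A.carrier →[L] C.carrier}
    (hf : Function.Surjective f) {ι : Type u} [Finite ι]
    {θ : ι → A.carrier → A.carrier → Prop} (hθ : ∀ i, IsRelCong K A (θ i))
    (hle : ∀ i, homKer f ≤ θ i) (hinf : ⨅ i, θ i ≤ homKer f) : ∃ i, θ i ≤ homKer f := by
  choose B hB g hg hker using fun i => (hθ i).exists_eq_homKer
  obtain rfl : θ = fun i => homKer (g i) := funext hker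
  choose m hm using fun i => exists_hom_factor hf (hle i)
  have hinj : Function.Injective (Alg.piLift m) := hf.forall₂.2 fun x y hxy => by
    refine hinf x y ?_
    simp only [iInf_apply, iInf_Prop_eq]
    intro i
    rw [homKer, ← hm, ← hm]
    exact congrFun hxy i
  obtain ⟨i, hi⟩ := hC.2 ι inferInstance B hB (Embedding.ofInjective hinj)
    fun i y => (hg i y).elim fun x hx => ⟨f x, (hm i x).trans hx⟩
  refine ⟨i, fun x y hxy => hi.1 ?_⟩
  exact (hm i x).trans (hxy.trans (hm i y).symm)

theorem IsRFSI.le_homKer_or_le_homKer {A C : Alg L} (hC : IsRFSI K C)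
    {f : A.carrier →[L] C.carrier} (hf : Function.Surjective f)
    {θ φ : A.carrier → A.carrier → Prop} (hθ : IsRelCong K A θ) (hφ : IsRelCong K A φ)
    (hfθ : homKer f ≤ θ) (hfφ : homKer f ≤ φ) (hinf : θ ⊓ φ ≤ homKer f) :
    θ ≤ homKer f ∨ φ ≤ homKer f := by
  obtain ⟨⟨_ | _⟩, hi⟩ := hC.exists_le_homKer hf (ι := ULift.{u} Bool)
    (θ := fun i => bif i.down then θ else φ)
    (by rintro ⟨_ | _⟩; exacts [hφ, hθ]) (by rintro ⟨_ | _⟩; exacts [hfφ, hfθ])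
    (by rwa [iInf_ulift, iInf_bool_eq])
  exacts [Or.inr hi, Or.inl hi]

end SubdirectIrreducibility

section MeetPrime

/-- Closure of the class of relatively finitely subdirectly irreducible members of `K` under
nontrivial subalgebras. -/
def RFSIClosedUnderSub (K : Set (Alg L)) : Prop :=
  ∀ A B : Alg L, IsRFSI K B → Nonempty (A.carrier ↪[L] B.carrier) →
    (∃ x y : A.carrier, x ≠ y) → IsRFSI K A

variable [L.IsAlgebraic] {K : Set (Alg L)}

theorem RelCongDistributive.relCongJoin_inf_relCongJoin_le (hRCD : RelCongDistributive K)
    (hS : ClosedUnderSub K) (hP : ClosedUnderProd K) {A : Alg L} (hA : A ∈ K)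
    {κ θ φ : A.carrier → A.carrier → Prop} (hκ : IsRelCong K A κ) (hθ : IsRelCong K A θ)
    (hφ : IsRelCong K A φ) (hle : θ ⊓ φ ≤ κ) :
    relCongJoin K A κ θ ⊓ relCongJoin K A κ φ ≤ κ := by
  have hφθ : φ ⊓ relCongJoin K A κ θ ≤ κ := fun x y hxy =>
    (hRCD A hA φ κ θ hφ hκ hθ x y).1 hxy κ hκ (fun _ _ h => h.2) fun a b h => hle a b h.symm
  exact fun x y hxy =>
    (hRCD A hA _ κ φ (isRelCong_relCongJoin hS hP κ θ) hκ hφ x y).1 hxy κ hκ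
      (fun _ _ h => h.2) fun a b h => hφθ a b h.symm

theorem RelCongDistributive.le_homKer_or_le_homKer (hRCD : RelCongDistributive K)
    (hsub : RFSIClosedUnderSub K) (hS : ClosedUnderSub K) (hP : ClosedUnderProd K) {A C : Alg L}
    (hA : A ∈ K) (hC : IsRFSI K C) (f : A.carrier →[L] C.carrier)
    {θ φ : A.carrier → A.carrier → Prop} (hθ : IsRelCong K A θ) (hφ : IsRelCong K A φ)
    (hle : θ ⊓ φ ≤ homKer f) : θ ≤ homKer f ∨ φ ≤ homKer f := by
  by_cases htriv : ∀ x y, f x = f y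
  · exact Or.inl fun x y _ => htriv x y
  obtain ⟨x, y, hxy⟩ : ∃ x y, f x ≠ f y := by simpa only [not_forall] using htriv
  let I : Alg L := ⟨f.range⟩
  let f' : A.carrier →[L] I.carrier := f.codRestrict f.range f.mem_range_self
  have hf' : Function.Surjective f' := by
    rintro ⟨_, a, rfl⟩
    exact ⟨a, rfl⟩
  have hker : homKer f' = homKer f := by
    ext a b
    exact Subtype.ext_iff
  have hI : IsRFSI K I := hsub I C hC ⟨f.range.subtype⟩
    ⟨f' x, f' y, fun h => hxy (congrArg Subtype.val h)⟩
  have hκ : IsRelCong K A (homKer f) := isRelCong_homKer hS hC.1 f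
  rw [← hker] at hle hκ ⊢
  refine (hI.le_homKer_or_le_homKer hf' (isRelCong_relCongJoin hS hP _ θ)
    (isRelCong_relCongJoin hS hP _ φ) (le_relCongJoin_left _ _) (le_relCongJoin_left _ _)
    (hRCD.relCongJoin_inf_relCongJoin_le hS hP hA hκ hθ hφ hle)).imp ?_ ?_ <;>
  exact (le_relCongJoin_right _ _).trans

theorem RelCongDistributive.homKer_fst_le_or_homKer_snd_le (hRCD : RelCongDistributive K)
    (hsub : RFSIClosedUnderSub K) (hS : ClosedUnderSub K) (hP : ClosedUnderProd K) {X Y C : Alg L}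
    (hX : X ∈ K) (hY : Y ∈ K) (hC : IsRFSI K C) (g : (X.prod Y).carrier →[L] C.carrier) :
    homKer (X.fst Y) ≤ homKer g ∨ homKer (X.snd Y) ≤ homKer g :=
  hRCD.le_homKer_or_le_homKer hsub hS hP (prod_mem hS hP hX hY) hC g
    (isRelCong_homKer hS hX _) (isRelCong_homKer hS hY _)
    fun _ _ hxy => congrArg g (Prod.ext hxy.1 hxy.2)

end MeetPrime

section Pushouts

variable {K : Set (Alg L)} {A X Y : Alg L} {p : A.carrier →[L] X.carrier}
  {q : A.carrier →[L] Y.carrier}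

/-- The kernel of the canonical map from `X` to the pushout, formed in `K`, of the span
`X ← A → Y` given by `p` and `q`. It is described through cocones, so that the pushout itself need
not be constructed. -/
def pushoutKer (K : Set (Alg L)) (p : A.carrier →[L] X.carrier) (q : A.carrier →[L] Y.carrier)
    (x y : X.carrier) : Prop :=
  ∀ C ∈ K, ∀ (g : X.carrier →[L] C.carrier) (h : Y.carrier →[L] C.carrier),
    (∀ a, g (p a) = h (q a)) → g x = g y

theorem pushoutKer_of_eq {a b : A.carrier} (hab : q a = q b) : pushoutKer K p q (p a) (p b) :=
  fun C _ g h hgh => by rw [hgh, hgh, hab]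

variable [L.IsAlgebraic]

theorem isRelCong_pushoutKer (hS : ClosedUnderSub K) (hP : ClosedUnderProd K)
    (p : A.carrier →[L] X.carrier) (q : A.carrier →[L] Y.carrier) :
    IsRelCong K X (pushoutKer K p q) := by
  let S : Set (X.carrier → X.carrier → Prop) :=
    {ρ | ∃ C ∈ K, ∃ (g : X.carrier →[L] C.carrier) (h : Y.carrier →[L] C.carrier),
      (∀ a, g (p a) = h (q a)) ∧ ρ = homKer g}
  have hS_eq : pushoutKer K p q = sInf S := by
    ext x y
    simp only [sInf_apply, iInf_apply, iInf_Prop_eq]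
    constructor
    · rintro hxy ⟨_, C, hC, g, h, hgh, rfl⟩
      exact hxy C hC g h hgh
    · exact fun hxy C hC g h hgh => hxy ⟨_, C, hC, g, h, hgh, rfl⟩
  rw [hS_eq]
  refine isRelCong_sInf hS hP ?_
  rintro _ ⟨C, hC, g, h, -, rfl⟩
  exact isRelCong_homKer hS hC g

theorem pushoutKer_of_relCongJoin (hS : ClosedUnderSub K) {a b : A.carrier}
    (hab : relCongJoin K A (homKer p) (homKer q) a b) : pushoutKer K p q (p a) (p b) := by
  intro C hC g h hgh
  refine hab (homKer (g.comp p)) (isRelCong_homKer hS hC _) (fun _ _ => congrArg g) ?_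
  exact fun x y hxy => pushoutKer_of_eq hxy C hC g h hgh

theorem eq_of_homKer_fst_le_of_homKer_snd_le {C : Alg L} (hC : C ∈ K)
    {g h : (X.prod Y).carrier →[L] C.carrier}
    (hgh : Set.EqOn g h (Set.range (Alg.prodLift p q))) (hg : homKer (X.fst Y) ≤ homKer g)
    (hh : homKer (X.snd Y) ≤ homKer h) {a b : A.carrier} (hab : pushoutKer K p q (p a) (p b)) :
    g (p a, q b) = h (p a, q b) := by
  have hfst : Function.Surjective (X.fst Y) := fun x => ⟨(x, q a), rfl⟩
  have hsnd : Function.Surjective (X.snd Y) := fun y => ⟨(p a, y), rfl⟩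
  obtain ⟨g', hg'⟩ := exists_hom_factor hfst hg
  obtain ⟨h', hh'⟩ := exists_hom_factor hsnd hh
  have hcocone (z : A.carrier) : g' (p z) = h' (q z) :=
    (hg' (p z, q z)).trans ((hgh ⟨z, rfl⟩).trans (hh' (p z, q z)).symm)
  calc g (p a, q b) = g' (p a) := (hg' (p a, q b)).symm
    _ = g' (p b) := hab C hC g' h' hcocone
    _ = h' (q b) := hcocone b
    _ = h (p a, q b) := hh' (p a, q b)

end Pushouts

section StrongEpimorphismSurjectivity

/-- Every pair `(p a, q b)` whose components agree in the pushout of a span `X ← A → Y` in `K` comes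
from a single element of `A`. Agreement is expressed as `p a` and `p b` being identified there. -/
def HasSpanInterpolation (K : Set (Alg L)) : Prop :=
  ∀ A ∈ K, ∀ X ∈ K, ∀ Y ∈ K, ∀ (p : A.carrier →[L] X.carrier) (q : A.carrier →[L] Y.carrier)
    (a b : A.carrier), pushoutKer K p q (p a) (p b) → ∃ c, p c = p a ∧ q c = q b

variable {K : Set (Alg L)}

theorem StrongES.dominion_range_subset (hSES : StrongES K) {A B : Alg L} (hA : A ∈ K) (hB : B ∈ K)
    (f : A.carrier →[L] B.carrier) : dominion K B.carrier (Set.range f) ⊆ Set.range f := by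
  intro b hb
  by_contra hbf
  obtain ⟨C, hC, g, h, hgh, hne⟩ := hSES A B hA hB f b hbf
  exact hne (hb C hC g h (Set.forall_mem_range.2 hgh))

variable [L.IsAlgebraic]

theorem prod_mem_dominion_range_prodLift (hK : IsQuasivariety K) (hRCD : RelCongDistributive K)
    (hsub : RFSIClosedUnderSub K) {A X Y : Alg L} (hX : X ∈ K) (hY : Y ∈ K)
    {p : A.carrier →[L] X.carrier} {q : A.carrier →[L] Y.carrier} {a b : A.carrier}
    (hab : pushoutKer K p q (p a) (p b)) :
    (p a, q b) ∈ dominion K (X.prod Y).carrier (Set.range (Alg.prodLift p q)) := by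
  obtain ⟨-, hS, hP, hU⟩ := hK
  refine mem_dominion_of_forall_isRSI hS hU fun C hC g h hgh => ?_
  have hfactor := hRCD.homKer_fst_le_or_homKer_snd_le hsub hS hP hX hY hC.isRFSI
  have heq (z : A.carrier) : g (p z, q z) = h (p z, q z) := hgh ⟨z, rfl⟩
  rcases hfactor g with hg | hg <;> rcases hfactor h with hh | hh
  · exact (hg (p a, q b) (p a, q a) rfl).trans ((heq a).trans (hh (p a, q a) (p a, q b) rfl))
  · exact eq_of_homKer_fst_le_of_homKer_snd_le hC.1 hgh hg hh hab
  · exact (eq_of_homKer_fst_le_of_homKer_snd_le hC.1 hgh.symm hh hg hab).symm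
  · exact (hg (p a, q b) (p b, q b) rfl).trans ((heq b).trans (hh (p b, q b) (p a, q b) rfl))

theorem StrongES.hasSpanInterpolation (hSES : StrongES K) (hK : IsQuasivariety K)
    (hRCD : RelCongDistributive K) (hsub : RFSIClosedUnderSub K) : HasSpanInterpolation K := by
  intro A hA X hX Y hY p q a b hab
  obtain ⟨c, hc⟩ := hSES.dominion_range_subset hA (prod_mem hK.2.1 hK.2.2.1 hX hY) _
    (prod_mem_dominion_range_prodLift hK hRCD hsub hX hY hab)
  exact ⟨c, congrArg Prod.fst hc, congrArg Prod.snd hc⟩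

end StrongEpimorphismSurjectivity

section SpanInterpolation

variable [L.IsAlgebraic] {K : Set (Alg L)}

theorem HasSpanInterpolation.isRelCong_homKer (hI : HasSpanInterpolation K)
    (hS : ClosedUnderSub K) (hP : ClosedUnderProd K) {A B : Alg L} (hA : A ∈ K)
    (h : A.carrier →[L] B.carrier) : IsRelCong K A (homKer h) := by
  let T : L.Substructure (A.prod A).carrier := (h.comp (A.fst A)).eqLocus (h.comp (A.snd A))
  let E : Alg L := ⟨T⟩
  have hE : E ∈ K := hS E _ (prod_mem hS hP hA hA) ⟨T.subtype⟩
  let p : E.carrier →[L] A.carrier := (A.fst A).domRestrict T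
  let q : E.carrier →[L] A.carrier := (A.snd A).domRestrict T
  let diag (x : A.carrier) : E.carrier := ⟨(x, x), rfl⟩
  have hker : homKer h = pushoutKer K p q := by
    ext x y
    constructor
    · intro hxy
      let e : E.carrier := ⟨(x, y), hxy⟩
      exact pushoutKer_of_eq (a := e) (b := diag y) rfl
    · intro hxy
      obtain ⟨c, hcx, hcy⟩ := hI E hE A hA A hA p q (diag x) (diag y) hxy
      calc h x = h (p c) := congrArg h hcx.symm
        _ = h (q c) := c.2
        _ = h y := congrArg h hcy
  exact hker ▸ isRelCong_pushoutKer hS hP p q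

theorem HasSpanInterpolation.closedUnderHomImg (hI : HasSpanInterpolation K)
    (hS : ClosedUnderSub K) (hP : ClosedUnderProd K) : ClosedUnderHomImg K := by
  intro A B hA h hh
  obtain ⟨C, hC, f, -, hf⟩ := (hI.isRelCong_homKer hS hP hA h).exists_eq_homKer
  obtain ⟨m, -⟩ := exists_embedding_factor hh hf
  exact hS B C hC ⟨m⟩

theorem HasSpanInterpolation.exists_of_relCongJoin (hI : HasSpanInterpolation K)
    (hS : ClosedUnderSub K) {A : Alg L} (hA : A ∈ K) {θ φ : A.carrier → A.carrier → Prop}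
    (hθ : IsRelCong K A θ) (hφ : IsRelCong K A φ) {a b : A.carrier}
    (hab : relCongJoin K A θ φ a b) : ∃ c, θ a c ∧ φ c b := by
  obtain ⟨X, hX, p, -, rfl⟩ := hθ.exists_eq_homKer
  obtain ⟨Y, hY, q, -, rfl⟩ := hφ.exists_eq_homKer
  obtain ⟨c, hpc, hqc⟩ := hI A hA X hX Y hY p q a b (pushoutKer_of_relCongJoin hS hab)
  exact ⟨c, hpc.symm, hqc⟩

theorem ClosedUnderHomImg.isRelCong_iff (hH : ClosedUnderHomImg K) {A : Alg L} (hA : A ∈ K)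
    {θ : A.carrier → A.carrier → Prop} : IsRelCong K A θ ↔ IsCongruenceOn A θ :=
  ⟨fun hθ => hθ.1, fun hθ => ⟨hθ, hH A _ hA (A.quotHom hθ) (A.quotHom_surjective hθ)⟩⟩

theorem ClosedUnderHomImg.congDistributiveClass (hH : ClosedUnderHomImg K)
    (hRCD : RelCongDistributive K) : CongDistributiveClass K := by
  intro A hA θ φ ψ
  simpa only [relCongJoin, congJoin, hH.isRelCong_iff hA] using hRCD A hA θ φ ψ

theorem HasSpanInterpolation.congPermutableClass (hI : HasSpanInterpolation K)
    (hS : ClosedUnderSub K) (hH : ClosedUnderHomImg K) : CongPermutableClass K := by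
  intro A hA
  have hcomm : ∀ θ φ : A.carrier → A.carrier → Prop, IsCongruenceOn A θ → IsCongruenceOn A φ →
      ∀ x y, (∃ z, θ x z ∧ φ z y) → ∃ z, φ x z ∧ θ z y := by
    rintro θ φ hθ hφ x y ⟨z, hxz, hzy⟩
    refine hI.exists_of_relCongJoin hS hA ((hH.isRelCong_iff hA).2 hφ)
      ((hH.isRelCong_iff hA).2 hθ) fun ρ hρ hφρ hθρ => ?_
    exact hρ.1.1.trans (hθρ x z hxz) (hφρ z y hzy)
  exact fun θ φ hθ hφ x y => ⟨hcomm θ φ hθ hφ x y, hcomm φ θ hφ hθ x y⟩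

theorem HasSpanInterpolation.hasCEP (hI : HasSpanInterpolation K) (hS : ClosedUnderSub K)
    (hP : ClosedUnderProd K) (hH : ClosedUnderHomImg K) : HasCEP K := by
  intro A B hA hB e θ hθ
  obtain ⟨Y, hY, q, -, rfl⟩ := ((hH.isRelCong_iff hA).2 hθ).exists_eq_homKer
  refine ⟨pushoutKer K e.toHom q, (isRelCong_pushoutKer hS hP e.toHom q).1, fun x y =>
    ⟨fun hxy => pushoutKer_of_eq hxy, fun hxy => ?_⟩⟩
  obtain ⟨c, hec, hqc⟩ := hI A hA B hB Y hY e.toHom q x y hxy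
  obtain rfl : c = x := e.injective hec
  exact hqc

end SpanInterpolation

/-- Let `K` be a relatively congruence distributive quasivariety whose class
of relatively finitely subdirectly irreducible members is closed under nontrivial subalgebras.
If `K` has the strong epimorphism surjectivity property, then `K` is an arithmetical variety
with the congruence extension property. -/
theorem statement_16 {L : FirstOrder.Language.{u, u}} [L.IsAlgebraic]
    {K : Set (Alg L)} (hK : IsQuasivariety K) (hRCD : RelCongDistributive K)
    (hsub : ∀ A B : Alg L, IsRFSI K B → Nonempty (A.carrier ↪[L] B.carrier) →
      (∃ x y : A.carrier, x ≠ y) → IsRFSI K A)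
    (hSES : StrongES K) :
    IsVariety K ∧ CongPermutableClass K ∧ CongDistributiveClass K ∧ HasCEP K := by
  have hI : HasSpanInterpolation K := hSES.hasSpanInterpolation hK hRCD hsub
  obtain ⟨-, hS, hP, -⟩ := hK
  have hH : ClosedUnderHomImg K := hI.closedUnderHomImg hS hP
  exact ⟨⟨hH, hS, hP⟩, hI.congPermutableClass hS hH, hH.congDistributiveClass hRCD,
    hI.hasCEP hS hP hH⟩

end Impl
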